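/- Let p > 0 and let L, L' be integers with 1 ≤ L < L'. Let A = (A_1,…,A_{L'}) be a random vector with i.i.d. components each having the generalized Gaussian GG(p^{1/p}, p) density f(a) = (p^{1−1/p} / (2Γ(1/p))) exp(−|a|^p/p), a ∈ ℝ; equivalently, the law of A is the product over L' coordinates of the measure on ℝ with density f with respect to Lebesgue measure. Then the law of the vector V = (A_1/‖A‖_p, …, A_L/‖A‖_p), i.e. the pushforward of the law of A under the map a ↦ (a_1/‖a‖_p, …, a_L/‖a‖_p), is absolutely continuous with respect to Lebesgue measure on ℝ^L with density q_1(u_1,…,u_L) = (p^L Γ(L'/p) / (2^L (Γ(1/p))^L Γ((L'−L)/p))) · (1 − ∑_{k=1}^{L} |u_k|^p)^{(L'−L)/p − 1} for (u_1,…,u_L) ∈ D_{p,L+1} and q_1 = 0 elsewhere. -/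

import Mathlib

open MeasureTheory

lemma gg_lintegral_prod {n : ℕ} (f : Fin n → ℝ → ENNReal) (hf : ∀ i, Measurable (f i)) :
    ∫⁻ x : Fin n → ℝ, ∏ i, f i (x i) = ∏ i, ∫⁻ x, f i x := by
  induction n with
  | zero => simp [volume_pi]
  | succ n ih =>
    rw [(volume_preserving_piFinSuccAbove (fun _ : Fin (n+1) => ℝ) 0).symm.lintegral_map_equiv]
    simp only [MeasurableEquiv.piFinSuccAbove_symm_apply, Fin.insertNthEquiv,
        Fin.prod_univ_succ, Fin.insertNth_zero]
    simp only [Equiv.coe_fn_mk, Fin.cons_zero, Fin.cons_succ]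
    rw [← ih (fun i => f i.succ) (fun i => hf _), ← lintegral_prod_mul (hf 0).aemeasurable]
    · rfl
    · exact (Finset.measurable_prod _ fun i _ => (hf i.succ).comp (measurable_pi_apply i)).aemeasurable

lemma gg_pi_withDensity {n : ℕ} (f : ℝ → ENNReal) (hf : Measurable f)
    [SigmaFinite ((volume : Measure ℝ).withDensity f)] :
    Measure.pi (fun _ : Fin n => (volume : Measure ℝ).withDensity f) =
      (volume : Measure (Fin n → ℝ)).withDensity (fun a => ∏ i, f (a i)) := by
  refine Measure.pi_eq fun s hs => ?_
  rw [withDensity_apply _ (MeasurableSet.univ_pi hs),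
    ← lintegral_indicator (MeasurableSet.univ_pi hs)]
  have : ∀ a : Fin n → ℝ, (Set.univ.pi s).indicator (fun a => ∏ i, f (a i)) a
      = ∏ i, (s i).indicator f (a i) := by
    intro a
    by_cases h : a ∈ Set.univ.pi s
    · rw [Set.indicator_of_mem h]
      exact Finset.prod_congr rfl fun i _ => (Set.indicator_of_mem (h i (Set.mem_univ i)) _).symm
    · rw [Set.indicator_of_notMem h]
      simp only [Set.mem_univ_pi, not_forall] at h
      obtain ⟨i, hi⟩ := h
      exact (Finset.prod_eq_zero (Finset.mem_univ i) (Set.indicator_of_notMem hi _)).symm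
  simp_rw [this]
  rw [gg_lintegral_prod _ (fun i => hf.indicator (hs i))]
  refine Finset.prod_congr rfl fun i _ => ?_
  rw [lintegral_indicator (hs i), withDensity_apply _ (hs i)]

lemma gg_density_one (p : ℝ) (hp : 0 < p) :
    ∫⁻ a : ℝ, ENNReal.ofReal
      (p ^ (1 - 1 / p) / (2 * Real.Gamma (1 / p)) * Real.exp (-|a| ^ p / p)) = 1 := by
  have hG : 0 < Real.Gamma (1 / p) := Real.Gamma_pos_of_pos (by positivity)
  have h1 : ∫ a : ℝ, p ^ (1 - 1 / p) / (2 * Real.Gamma (1 / p)) * Real.exp (-|a| ^ p / p) = 1 := by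
    rw [integral_const_mul, integral_comp_abs (f := fun a => Real.exp (-a ^ p / p))]
    have := integral_exp_neg_mul_rpow (p := p) (b := 1 / p) hp (by positivity)
    rw [Real.Gamma_add_one (by positivity)] at this
    have e : ∀ x : ℝ, -x ^ p / p = -(1 / p) * x ^ p := fun x => by ring
    simp_rw [e]
    rw [this, one_div, Real.inv_rpow hp.le, neg_div, Real.rpow_neg hp.le, inv_inv,
      Real.rpow_sub hp, Real.rpow_one, one_div]
    rw [one_div] at hG
    have : 0 < p ^ p⁻¹ := by positivity
    field_simp
  rw [← ofReal_integral_eq_lintegral_ofReal, h1, ENNReal.ofReal_one]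
  · by_contra h
    rw [integral_undef h] at h1
    norm_num at h1
  · exact Filter.Eventually.of_forall fun a => by positivity

lemma gg_gamma (p : ℝ) (hp : 0 < p) (a : ℝ) (ha : 0 < a) :
    ∫⁻ r in Set.Ioi (0:ℝ), ENNReal.ofReal (r ^ (a - 1)) * ENNReal.ofReal (Real.exp (-r / p)) =
      ENNReal.ofReal (p ^ a * Real.Gamma a) := by
  have hG : 0 < Real.Gamma a := Real.Gamma_pos_of_pos ha
  have h := Real.integral_rpow_mul_exp_neg_mul_Ioi (r := 1 / p) ha (by positivity)
  rw [one_div_one_div] at h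
  rw [← h, ofReal_integral_eq_lintegral_ofReal]
  · refine setLIntegral_congr_fun measurableSet_Ioi fun r hr => ?_
    have hr' : (0:ℝ) < r := hr
    rw [← ENNReal.ofReal_mul (by positivity)]
    congr 3
    ring
  · by_contra h'
    rw [integral_undef h'] at h
    have : 0 < p ^ a * Real.Gamma a := by positivity
    linarith
  · rw [Filter.EventuallyLE, ae_restrict_iff' measurableSet_Ioi]
    exact ae_of_all _ fun r (hr : 0 < r) => by positivity

lemma gg_scale {n : ℕ} (t : ℝ) (ht : 0 < t) (F : (Fin n → ℝ) → ENNReal) (hF : Measurable F) :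
    ∫⁻ x, F x = ENNReal.ofReal (t ^ n) * ∫⁻ u, F (t • u) := by
  have h := Measure.map_addHaar_smul (volume : Measure (Fin n → ℝ)) ht.ne'
  rw [← lintegral_map (f := F) (g := fun u => t • u) hF (measurable_const_smul t), h,
    lintegral_smul_measure, smul_eq_mul, ← mul_assoc, ← ENNReal.ofReal_mul (by positivity)]
  have : 0 < t ^ n := by positivity
  rw [Module.finrank_fin_fun, abs_of_pos (by positivity), mul_inv_cancel₀ this.ne']
  simp

lemma gg_split {L M : ℕ} (F : (Fin (L + M) → ℝ) → ENNReal) (hF : Measurable F) :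
    ∫⁻ a, F a = ∫⁻ x : Fin L → ℝ, ∫⁻ y : Fin M → ℝ, F (Fin.append x y) := by
  have h1 := volume_measurePreserving_sumPiEquivProdPi_symm (fun _ : Fin L ⊕ Fin M => ℝ)
  have h2 := volume_measurePreserving_piCongrLeft (fun _ : Fin (L + M) => ℝ) finSumFinEquiv
  have key : ∀ z : (Fin L → ℝ) × (Fin M → ℝ),
      (MeasurableEquiv.piCongrLeft (fun _ : Fin (L + M) => ℝ) finSumFinEquiv)
      ((MeasurableEquiv.sumPiEquivProdPi (fun _ : Fin L ⊕ Fin M => ℝ)).symm z)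
      = Fin.append z.1 z.2 := by
    intro z
    funext i
    refine Fin.addCases (fun j => ?_) (fun j => ?_) i
    · rw [Fin.append_left]
      exact Equiv.piCongrLeft_sumInl (fun _ : Fin (L + M) => ℝ) finSumFinEquiv z.1 z.2 j
    · rw [Fin.append_right]
      exact Equiv.piCongrLeft_sumInr (fun _ : Fin (L + M) => ℝ) finSumFinEquiv z.1 z.2 j
  have h3 : MeasurePreserving (fun z : (Fin L → ℝ) × (Fin M → ℝ) => Fin.append z.1 z.2) := by
    have := h2.comp h1
    rwa [show (MeasurableEquiv.piCongrLeft (fun _ : Fin (L + M) => ℝ) finSumFinEquiv) ∘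
      (MeasurableEquiv.sumPiEquivProdPi (fun _ : Fin L ⊕ Fin M => ℝ)).symm = _ from funext key]
      at this
  rw [← h3.lintegral_comp hF]
  exact lintegral_prod _ (hF.comp h3.measurable).aemeasurable

lemma gg_pow (q r : ℝ) (hq : 0 < q) (hr : 0 < r) :
    ∫⁻ s in Set.Ioo 0 r, ENNReal.ofReal (s ^ (q - 1)) = ENNReal.ofReal (r ^ q / q) := by
  have h := integral_rpow (a := 0) (b := r) (r := q - 1) (Or.inl (by linarith))
  rw [sub_add_cancel, Real.zero_rpow hq.ne', sub_zero] at h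
  have hi := intervalIntegral.intervalIntegrable_rpow' (a := 0) (b := r) (r := q - 1) (by linarith)
  rw [intervalIntegrable_iff_integrableOn_Ioo_of_le hr.le] at hi
  rw [← h, intervalIntegral.integral_of_le hr.le, integral_Ioc_eq_integral_Ioo,
    ofReal_integral_eq_lintegral_ofReal hi]
  rw [Filter.EventuallyLE, ae_restrict_iff' measurableSet_Ioo]
  exact ae_of_all _ fun r hr => Real.rpow_nonneg hr.1.le _

lemma gg_N_smul {n : ℕ} (p : ℝ) (hp : 0 < p) (r : ℝ) (hr : 0 < r) (u : Fin n → ℝ) :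
    ∑ j, |(r ^ (1 / p) • u) j| ^ p = r * ∑ j, |u j| ^ p := by
  rw [Finset.mul_sum]
  refine Finset.sum_congr rfl fun j _ => ?_
  rw [Pi.smul_apply, smul_eq_mul, abs_mul, Real.mul_rpow (abs_nonneg _) (abs_nonneg _),
    abs_of_pos (by positivity), ← Real.rpow_mul hr.le, one_div_mul_cancel hp.ne', Real.rpow_one]

lemma gg_N_meas {n : ℕ} (p : ℝ) : Measurable (fun y : Fin n → ℝ => ∑ j, |y j| ^ p) := by
  fun_prop

lemma gg_radial (p : ℝ) (hp : 0 < p) (M : ℕ) (hM : 0 < M) :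
    ∃ C : ENNReal, ∀ φ : ℝ → ENNReal, Measurable φ →
      ∫⁻ y : Fin M → ℝ, φ (∑ j, |y j| ^ p) =
        C * ∫⁻ s in Set.Ioi (0:ℝ), ENNReal.ofReal (s ^ ((M : ℝ) / p - 1)) * φ s := by
  set N : (Fin M → ℝ) → ℝ := fun y => ∑ j, |y j| ^ p with hN
  have hNm : Measurable N := gg_N_meas p
  have hN0 : ∀ y, 0 ≤ N y := fun y => Finset.sum_nonneg fun j _ => by positivity
  set q : ℝ := (M : ℝ) / p with hq
  have hq0 : 0 < q := by positivity
  have hball : ∀ r : ℝ, 0 < r →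
      volume (N ⁻¹' Set.Iio r) = ENNReal.ofReal (r ^ q) * volume (N ⁻¹' Set.Iio 1) := by
    intro r hr
    have hs := gg_scale (n := M) (r ^ (1 / p)) (by positivity)
      ((N ⁻¹' Set.Iio r).indicator 1) (measurable_one.indicator (hNm measurableSet_Iio))
    rw [lintegral_indicator_one (hNm measurableSet_Iio)] at hs
    rw [hs, ← Real.rpow_natCast, ← Real.rpow_mul hr.le, show 1 / p * (M:ℝ) = q by rw [hq]; ring,
      ← lintegral_indicator_one (hNm measurableSet_Iio)]
    congr 1
    refine lintegral_congr fun u => ?_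
    have : N (r ^ (1 / p) • u) = r * N u := gg_N_smul p hp r hr u
    classical
    simp only [Set.indicator_apply, Set.mem_preimage, Set.mem_Iio, this, mul_lt_iff_lt_one_right hr]
    rfl
  have hfin : volume (N ⁻¹' Set.Iio 1) < ⊤ := by
    refine lt_of_le_of_lt (measure_mono (t := Set.univ.pi fun _ : Fin M => Set.Icc (-1:ℝ) 1) ?_)
      (by rw [volume_pi, Measure.pi_pi]; simp)
    intro y hy j _
    have h1 : |y j| ^ p ≤ N y := Finset.single_le_sum (f := fun j => |y j| ^ p)
      (fun j _ => by positivity) (Finset.mem_univ j)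
    have h2 : |y j| ^ p < 1 := lt_of_le_of_lt h1 hy
    have h3 : |y j| < 1 := by
      by_contra h
      exact absurd (Real.one_le_rpow (not_lt.1 h) hp.le) (not_le.2 h2)
    exact abs_le.1 h3.le
  set B := volume (N ⁻¹' Set.Iio 1) with hB
  refine ⟨B * ENNReal.ofReal q, fun φ hφ => ?_⟩
  have hdm : Measurable fun s : ℝ => ENNReal.ofReal (s ^ (q - 1)) := by fun_prop
  set ν : Measure ℝ := Measure.map N volume with hν
  set ρ : Measure ℝ := (B * ENNReal.ofReal q) •
    (volume.restrict (Set.Ioi (0:ℝ))).withDensity (fun s => ENNReal.ofReal (s ^ (q - 1))) with hρ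
  have hνI : ∀ r : ℝ, 0 < r → ν (Set.Iio r) = ENNReal.ofReal (r ^ q) * B := fun r hr => by
    rw [hν, Measure.map_apply hNm measurableSet_Iio, hball r hr]
  have hνI0 : ∀ r : ℝ, r ≤ 0 → ν (Set.Iio r) = 0 := fun r hr => by
    rw [hν, Measure.map_apply hNm measurableSet_Iio]
    convert measure_empty
    · ext y
      simp only [Set.mem_preimage, Set.mem_Iio, Set.mem_empty_iff_false, iff_false, not_lt]
      exact hr.trans (hN0 y)
    · infer_instance
  have hνfin : ∀ r, ν (Set.Iio r) < ⊤ := fun r => by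
    rcases le_or_gt r 0 with h | h
    · rw [hνI0 r h]; simp
    · rw [hνI r h]; exact ENNReal.mul_lt_top ENNReal.ofReal_lt_top hfin
  have heq : ∀ r, ν (Set.Iio r) = ρ (Set.Iio r) := fun r => by
    rw [hρ, Measure.smul_apply, withDensity_apply _ measurableSet_Iio,
      Measure.restrict_restrict measurableSet_Iio, Set.Iio_inter_Ioi]
    rcases le_or_gt r 0 with h | h
    · rw [hνI0 r h, Set.Ioo_eq_empty (not_lt.2 h)]; simp
    · rw [hνI r h, gg_pow q r hq0 h, smul_eq_mul, mul_assoc, ← ENNReal.ofReal_mul hq0.le, mul_comm,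
        mul_div_cancel₀ _ hq0.ne']
  have : IsLocallyFiniteMeasure ν := ⟨fun x => ⟨Set.Iio (x + 1), Iio_mem_nhds (by linarith), hνfin _⟩⟩
  have hνρ : ν = ρ := by
    refine Measure.ext_of_Ico ν ρ fun a b hab => ?_
    have e : Set.Ico a b = Set.Iio b \ Set.Iio a := by ext; simp
    rw [e, measure_sdiff (Set.Iio_subset_Iio hab.le) measurableSet_Iio.nullMeasurableSet (hνfin a).ne,
      measure_sdiff (Set.Iio_subset_Iio hab.le) measurableSet_Iio.nullMeasurableSet
        (by rw [← heq]; exact (hνfin a).ne), heq, heq]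
  rw [← lintegral_map (f := φ) hφ hNm, ← hν, hνρ, hρ, lintegral_smul_measure, smul_eq_mul,
    lintegral_withDensity_eq_lintegral_mul _ hdm hφ]
  rfl

set_option maxHeartbeats 2000000 in
lemma gg_main (p : ℝ) (hp : 0 < p) (L M : ℕ) (hM : 0 < M) (C : ENNReal)
    (hC : ∀ φ : ℝ → ENNReal, Measurable φ →
      ∫⁻ y : Fin M → ℝ, φ (∑ j, |y j| ^ p) =
        C * ∫⁻ s in Set.Ioi (0:ℝ), ENNReal.ofReal (s ^ ((M : ℝ) / p - 1)) * φ s)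
    (g : (Fin L → ℝ) → ENNReal) (hg : Measurable g) :
    ∫⁻ a : Fin (L + M) → ℝ, ENNReal.ofReal (Real.exp (-(∑ j, |a j| ^ p) / p)) *
        g (fun k => a (Fin.castAdd M k) / (∑ j, |a j| ^ p) ^ (1 / p)) =
      C * (ENNReal.ofReal (p ^ (((L : ℝ) + M) / p) * Real.Gamma (((L : ℝ) + M) / p)) *
        ∫⁻ u : Fin L → ℝ, if ∑ k, |u k| ^ p < 1 then
          ENNReal.ofReal ((1 - ∑ k, |u k| ^ p) ^ ((M : ℝ) / p - 1)) * g u else 0) := by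
  set q : ℝ := (M : ℝ) / p with hq
  set N : (Fin L → ℝ) → ℝ := fun y => ∑ j, |y j| ^ p with hN
  have hNm : Measurable N := gg_N_meas p
  have hN0 : ∀ y, 0 ≤ N y := fun y => Finset.sum_nonneg fun j _ => by positivity
  let Φ : (Fin L → ℝ) → ℝ → ENNReal := fun x r =>
    ENNReal.ofReal (Real.exp (-r / p)) * g (fun k => x k / r ^ (1 / p))
  have hΦ : Measurable (Function.uncurry Φ) := by
    refine Measurable.mul (by fun_prop) (hg.comp ?_)
    refine measurable_pi_lambda _ fun k => ?_
    fun_prop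
  let H : (Fin L → ℝ) → ℝ → ENNReal := fun x r =>
    if N x < r then ENNReal.ofReal ((r - N x) ^ (q - 1)) * Φ x r else 0
  have hH : Measurable (Function.uncurry H) := by
    refine Measurable.ite (measurableSet_lt (hNm.comp measurable_fst) measurable_snd)
      (Measurable.mul ?_ hΦ) measurable_const
    have : Measurable fun z : (Fin L → ℝ) × ℝ => N z.1 := hNm.comp measurable_fst
    exact ENNReal.measurable_ofReal.comp ((measurable_snd.sub this).pow_const _)
  let K : (Fin L → ℝ) → ENNReal := fun u =>
    if N u < 1 then ENNReal.ofReal ((1 - N u) ^ (q - 1)) * g u else 0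
  have hK : Measurable K := by
    refine Measurable.ite (measurableSet_lt hNm measurable_const)
      (Measurable.mul ?_ hg) measurable_const
    exact ENNReal.measurable_ofReal.comp ((measurable_const.sub hNm).pow_const _)
  change _ = C * (_ * ∫⁻ u, K u)
  have hNL : Measurable (fun a : Fin (L + M) → ℝ => ∑ j, |a j| ^ p) := gg_N_meas p
  rw [gg_split]
  swap
  · refine Measurable.mul ?_ (hg.comp ?_)
    · exact ENNReal.measurable_ofReal.comp (Real.measurable_exp.comp (hNL.neg.div_const p))
    · exact measurable_pi_lambda _ fun k => (measurable_pi_apply _).div (hNL.pow_const _)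
  have step1 : ∀ x : Fin L → ℝ, ∫⁻ y : Fin M → ℝ,
      ENNReal.ofReal (Real.exp (-(∑ j, |(Fin.append x y : Fin (L + M) → ℝ) j| ^ p) / p)) *
        g (fun k => (Fin.append x y : Fin (L + M) → ℝ) (Fin.castAdd M k) /
          (∑ j, |(Fin.append x y : Fin (L + M) → ℝ) j| ^ p) ^ (1 / p)) = C * ∫⁻ r, H x r := by
    intro x
    have hφ : Measurable fun s : ℝ => Φ x (N x + s) :=
      hΦ.comp (measurable_const.prodMk (measurable_const.add measurable_id))
    have h := hC _ hφ
    simp only [Fin.sum_univ_add, Fin.append_left, Fin.append_right]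
    refine h.trans ?_
    rw [← lintegral_add_left_eq_self (H x) (N x), ← lintegral_indicator measurableSet_Ioi]
    congr 1
    refine lintegral_congr fun s => ?_
    simp only [Set.indicator_apply, Set.mem_Ioi, H, lt_add_iff_pos_right, add_sub_cancel_left]
  rw [lintegral_congr step1, lintegral_const_mul _ hH.lintegral_prod_right,
    lintegral_lintegral_swap hH.aemeasurable]
  congr 1
  have step2 : ∀ r : ℝ, ∫⁻ x, H x r = (Set.Ioi (0:ℝ)).indicator (fun r =>
      (ENNReal.ofReal (r ^ (((L : ℝ) + M) / p - 1)) * ENNReal.ofReal (Real.exp (-r / p))) *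
        ∫⁻ u, K u) r := by
    intro r
    have hHr : Measurable fun x => H x r := hH.of_uncurry_right
    rcases le_or_gt r 0 with hr | hr
    · rw [Set.indicator_of_notMem (by simpa using hr)]
      rw [lintegral_eq_zero_iff hHr]
      refine Filter.Eventually.of_forall fun x => ?_
      exact if_neg (not_lt.2 (hr.trans (hN0 x)))
    · rw [Set.indicator_of_mem (by simpa using hr), gg_scale (r ^ (1 / p)) (by positivity) _
        hHr]
      have e : ∀ u, H (r ^ (1 / p) • u) r =
          (ENNReal.ofReal (r ^ (q - 1)) * ENNReal.ofReal (Real.exp (-r / p))) * K u := by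
        intro u
        have hNu : N (r ^ (1 / p) • u) = r * N u := gg_N_smul p hp r hr u
        have hu : (fun k => (r ^ (1 / p) • u) k / r ^ (1 / p)) = u := by
          funext k
          rw [Pi.smul_apply, smul_eq_mul, mul_div_cancel_left₀]
          positivity
        simp only [H, K, Φ, hNu, hu, mul_lt_iff_lt_one_right hr]
        split_ifs with h
        · rw [show r - r * N u = r * (1 - N u) by ring, Real.mul_rpow hr.le (by linarith),
            ENNReal.ofReal_mul (by positivity)]
          ring
        · simp
      rw [lintegral_congr e, lintegral_const_mul _ hK, ← mul_assoc, ← mul_assoc,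
        ← ENNReal.ofReal_mul (by positivity), ← Real.rpow_natCast, ← Real.rpow_mul hr.le,
        ← Real.rpow_add hr]
      rw [show 1 / p * (L : ℝ) + (q - 1) = ((L : ℝ) + M) / p - 1 by rw [hq]; ring]
  rw [lintegral_congr step2, lintegral_indicator measurableSet_Ioi, lintegral_mul_const _ (by fun_prop),
    gg_gamma p hp _ (by positivity)]

theorem pushforward_of_normalized_gg_vector_has_marginal_density
    (p : ℝ) (hp : 0 < p) (L L' : ℕ) (hL : 1 ≤ L) (hLL' : L < L') :
    Measure.map
        (fun a : Fin L' → ℝ => fun k : Fin L =>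
          a (Fin.castLE hLL'.le k) / (∑ j, |a j| ^ p) ^ (1 / p))
        (Measure.pi fun _ : Fin L' =>
          volume.withDensity fun a : ℝ =>
            ENNReal.ofReal
              (p ^ (1 - 1 / p) / (2 * Real.Gamma (1 / p)) * Real.exp (-|a| ^ p / p))) =
      (volume : Measure (Fin L → ℝ)).withDensity fun u =>
        ENNReal.ofReal
          (if ∑ k, |u k| ^ p < 1 then
            p ^ L * Real.Gamma ((L' : ℝ) / p) /
                (2 ^ L * Real.Gamma (1 / p) ^ L * Real.Gamma (((L' : ℝ) - L) / p)) *
              (1 - ∑ k, |u k| ^ p) ^ (((L' : ℝ) - L) / p - 1)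
          else 0) := by
  obtain ⟨M, rfl⟩ := Nat.exists_eq_add_of_lt hLL'
  obtain ⟨m, hm⟩ : ∃ m, m = M + 1 := ⟨_, rfl⟩
  have hM : 0 < m := by omega
  have hLm : L + M + 1 = L + m := by omega
  clear hL
  revert hLL'
  rw [hLm]
  intro hLL'
  clear hLm hm M
  rw [show ((L + m : ℕ) : ℝ) = (L : ℝ) + m by push_cast; ring, add_sub_cancel_left]
  set c : ℝ := p ^ (1 - 1 / p) / (2 * Real.Gamma (1 / p)) with hc
  have hG : 0 < Real.Gamma (1 / p) := Real.Gamma_pos_of_pos (by positivity)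
  have hGm : 0 < Real.Gamma ((m : ℝ) / p) := Real.Gamma_pos_of_pos (by positivity)
  have hGL : 0 < Real.Gamma (((L : ℝ) + m) / p) := Real.Gamma_pos_of_pos (by positivity)
  have hc0 : 0 < c := by positivity
  set f : ℝ → ENNReal := fun a => ENNReal.ofReal (c * Real.exp (-|a| ^ p / p)) with hf
  have hfm : Measurable f := by fun_prop
  have hf1 : ∫⁻ a, f a = 1 := gg_density_one p hp
  have hprob : IsProbabilityMeasure ((volume : Measure ℝ).withDensity f) :=
    ⟨by rw [withDensity_apply _ MeasurableSet.univ, Measure.restrict_univ, hf1]⟩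
  have hprod : ∀ n : ℕ, ∀ a : Fin n → ℝ, ∏ i, f (a i) =
      ENNReal.ofReal (c ^ n) * ENNReal.ofReal (Real.exp (-(∑ j, |a j| ^ p) / p)) := by
    intro n a
    rw [← ENNReal.ofReal_mul (by positivity), hf,
      ← ENNReal.ofReal_prod_of_nonneg (fun i _ => by positivity), Finset.prod_mul_distrib,
      ← Real.exp_sum, Finset.prod_const, Finset.card_univ, Fintype.card_fin, ← Finset.sum_div,
      Finset.sum_neg_distrib]
  obtain ⟨C, hC⟩ := gg_radial p hp m hM
  -- the constant
  have hC1 : ENNReal.ofReal (c ^ m) *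
      (C * ENNReal.ofReal (p ^ ((m : ℝ) / p) * Real.Gamma ((m : ℝ) / p))) = 1 := by
    have h1 := gg_lintegral_prod (n := m) (fun _ => f) (fun _ => hfm)
    simp only [hprod, hf1, Finset.prod_const_one] at h1
    rw [lintegral_const_mul _ (by fun_prop),
      hC (fun t => ENNReal.ofReal (Real.exp (-t / p))) (by fun_prop),
      gg_gamma p hp _ (by positivity)] at h1
    exact h1
  have hCval : C = ENNReal.ofReal (1 / (c ^ m * (p ^ ((m : ℝ) / p) * Real.Gamma ((m : ℝ) / p)))) := by
    set D := p ^ ((m : ℝ) / p) * Real.Gamma ((m : ℝ) / p) with hD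
    have hD0 : 0 < D := by positivity
    have h2 : C * ENNReal.ofReal (c ^ m * D) = 1 := by
      rw [ENNReal.ofReal_mul (by positivity), ← hC1]; ring
    rw [one_div, ENNReal.ofReal_inv_of_pos (by positivity)]
    exact ENNReal.eq_inv_of_mul_eq_one_left h2
  rw [gg_pi_withDensity f hfm]
  have hNL : Measurable (fun a : Fin (L + m) → ℝ => ∑ j, |a j| ^ p) := gg_N_meas p
  have hV : Measurable (fun a : Fin (L + m) → ℝ => fun k : Fin L =>
          a (Fin.castLE hLL'.le k) / (∑ j, |a j| ^ p) ^ (1 / p)) :=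
    measurable_pi_lambda _ fun k => (measurable_pi_apply _).div (hNL.pow_const _)
  have hNL' : Measurable (fun a : Fin L → ℝ => ∑ j, |a j| ^ p) := gg_N_meas p
  ext S hS
  rw [Measure.map_apply hV hS, withDensity_apply _ (hV hS), withDensity_apply _ hS,
    ← lintegral_indicator (hV hS), ← lintegral_indicator hS]
  have hmain := gg_main p hp L m hM C hC (S.indicator 1) (measurable_one.indicator hS)
  have e1 : ∀ a : Fin (L + m) → ℝ, ((fun a : Fin (L + m) → ℝ => fun k : Fin L =>
          a (Fin.castLE hLL'.le k) / (∑ j, |a j| ^ p) ^ (1 / p)) ⁻¹' S).indicator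
            (fun a => ∏ i, f (a i)) a = ENNReal.ofReal (c ^ (L + m)) *
        (ENNReal.ofReal (Real.exp (-(∑ j, |a j| ^ p) / p)) *
        (S.indicator 1 (fun k => a (Fin.castAdd m k) / (∑ j, |a j| ^ p) ^ (1 / p)) : ENNReal)) := by
    intro a
    rw [← mul_assoc, ← hprod]
    classical
    simp only [Set.indicator_apply, Set.mem_preimage, Pi.one_apply, mul_ite, mul_one, mul_zero]
    rfl
  rw [lintegral_congr e1, lintegral_const_mul _ ?_, hmain]
  swap
  · refine Measurable.mul ?_ ((measurable_one.indicator hS).comp hV)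
    exact ENNReal.measurable_ofReal.comp (Real.measurable_exp.comp (hNL.neg.div_const p))
  rw [hCval, ← mul_assoc, ← mul_assoc, ← ENNReal.ofReal_mul (by positivity),
    ← ENNReal.ofReal_mul (by positivity), ← lintegral_const_mul]
  swap
  · refine Measurable.ite (measurableSet_lt hNL' measurable_const)
      (Measurable.mul ?_ (measurable_one.indicator hS)) measurable_const
    exact ENNReal.measurable_ofReal.comp ((measurable_const.sub hNL').pow_const _)
  refine lintegral_congr fun u => ?_
  have hconst : c ^ (L + m) * (1 / (c ^ m * (p ^ ((m : ℝ) / p) * Real.Gamma ((m : ℝ) / p)))) *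
      (p ^ (((L : ℝ) + m) / p) * Real.Gamma (((L : ℝ) + m) / p)) =
      p ^ L * Real.Gamma (((L : ℝ) + m) / p) /
        (2 ^ L * Real.Gamma (1 / p) ^ L * Real.Gamma ((m : ℝ) / p)) := by
    have h1 : c ^ L * p ^ ((L : ℝ) / p) = p ^ L / (2 ^ L * Real.Gamma (1 / p) ^ L) := by
      have : p ^ ((L : ℝ) / p) = (p ^ (1 / p)) ^ L := by
        rw [← Real.rpow_natCast, ← Real.rpow_mul hp.le]
        congr 1
        ring
      rw [this, ← mul_pow, ← mul_pow, ← div_pow, hc, div_mul_eq_mul_div, ← Real.rpow_add hp,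
        sub_add_cancel, Real.rpow_one]
    have h2 : p ^ (((L : ℝ) + m) / p) = p ^ ((L : ℝ) / p) * p ^ ((m : ℝ) / p) := by
      rw [← Real.rpow_add hp]
      congr 1
      ring
    have hpm : 0 < p ^ ((m : ℝ) / p) := by positivity
    calc _ = (c ^ L * p ^ ((L : ℝ) / p)) * Real.Gamma (((L : ℝ) + m) / p) /
          Real.Gamma ((m : ℝ) / p) := by
          rw [h2, pow_add]
          field_simp
      _ = _ := by
          rw [h1]
          field_simp
  rw [hconst]
  by_cases hu : u ∈ S
  · rw [Set.indicator_of_mem hu, Set.indicator_of_mem hu]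
    split_ifs with h
    · rw [Pi.one_apply, mul_one, ← ENNReal.ofReal_mul (by positivity)]
    · simp
  · rw [Set.indicator_of_notMem hu, Set.indicator_of_notMem hu]
    simp
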